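/- Let p be a prime. Let L := {classes in ℙ(ℚ³) of vectors (1,a,b) with a, b ∈ ℤ_(p)} ⊂ ℙ(ℚ³), and let ρ_L: L → 𝔸²(F_p) be the reduction map sending the class of (1,a,b) to (a mod p, b mod p). Then there exist a ℤ_(p)-lattice B ⊂ ℚ³ and an injection ι: 𝔸²(F_p) ↪ ℙ(B/pB) such that ρ_B(x) = ι(ρ_L(x)) for every x ∈ L; moreover, any two ℤ_(p)-lattices B with this property (for some injection ι) are equivalent. -/

import Mathlib

/- Common set-up for statements about projective spaces `ℙ(V)`: flag maps,
   `ℤ_(p)`-lattices and the associated reduction maps to `ℙ(B/pB)`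
   (two nonzero vectors are identified by `ρ_B` iff suitable nonzero scalar
   multiples of them lie in `B ∖ pB` and are congruent modulo `pB`). -/

universe u v w

section PreludeB

variable {k : Type u} [Field k] {V : Type v} [AddCommGroup V] [Module k V] {A : Type w}

/-- The projective subspace `ℙ(W) ⊆ ℙ(V)` attached to a submodule `W ⊆ V`. -/
def psub (W : Submodule k V) : Set (Projectivization k V) :=
  {x | ∃ v : V, ∃ h : v ≠ 0, Projectivization.mk k v h = x ∧ v ∈ W}

/-- The projective line of `ℙ(V)` through the classes of two (independent)
vectors `v`, `w`. -/
def lineP (v w : V) : Set (Projectivization k V) :=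
  {x | ∃ a b : k, ∃ h : a • v + b • w ≠ 0, Projectivization.mk k (a • v + b • w) h = x}

/-- `f` is a flag map on the finite-dimensional projective subspace `ℙ(W)`:
there is a chain (flag) of subspaces of `W` such that `f` is constant on each
successive difference. -/
def ChainFlagOn (f : Projectivization k V → A) (W : Submodule k V) : Prop :=
  ∃ c : ℕ → Submodule k V, c 0 = ⊥ ∧ (∃ n, c n = W) ∧ (∀ i, c i ≤ c (i + 1)) ∧
    (∀ i, c i ≤ W) ∧
    ∀ i, ∀ x ∈ psub (c (i + 1)) \ psub (c i), ∀ y ∈ psub (c (i + 1)) \ psub (c i), f x = f y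

/-- A flag map on a projective space over `F_p` (possibly infinite-dimensional):
the restriction to every finite-dimensional projective subspace is a flag map. -/
def FpFlagMap (f : Projectivization k V → A) : Prop :=
  ∀ W : Submodule k V, FiniteDimensional k W → ChainFlagOn f W

end PreludeB

section PreludeBQ

variable {V : Type v} [AddCommGroup V] [Module ℚ V] {A : Type w}

/-- The `ℤ_(p)`-span of a finite set of vectors (coefficients are rationals
with denominator coprime to `p`). -/
def zpSpanV (p : ℕ) (s : Finset V) : Set V :=
  {z | ∃ f : V → ℚ, (∀ t, ¬ (p ∣ (f t).den)) ∧ z = ∑ t ∈ s, f t • t}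

/-- `p·B`. -/
def pSMul (p : ℕ) (B : Set V) : Set V := {z | ∃ b ∈ B, z = (p : ℚ) • b}

/-- `B` is a `ℤ_(p)`-lattice in the `ℚ`-subspace `W`: a finitely generated
`ℤ_(p)`-submodule spanning `W` over `ℚ`. -/
def IsZpLatIn (p : ℕ) (W : Submodule ℚ V) (B : Set V) : Prop :=
  (∃ s : Finset V, B = zpSpanV p s) ∧ Submodule.span ℚ B = W

/-- Two nonzero vectors have the same image under the reduction map
`ρ_B : ℙ(V) → ℙ(B/pB)`. -/
def ZpRelV (p : ℕ) (B : Set V) (x y : V) : Prop :=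
  ∃ x' y' : V, (∃ a : ℚ, a ≠ 0 ∧ x' = a • x) ∧ (∃ b : ℚ, b ≠ 0 ∧ y' = b • y) ∧
    x' ∈ B ∧ x' ∉ pSMul p B ∧ y' ∈ B ∧ y' ∉ pSMul p B ∧ x' - y' ∈ pSMul p B

/-- Equivalence of lattices: `B' = a·B` for some `a ∈ ℚ^×`. -/
def LatEq (B B' : Set V) : Prop := ∃ a : ℚ, a ≠ 0 ∧ B' = (fun t => a • t) '' B

/-- `f`, restricted to `ℙ(W)`, is induced via the lattice `B` (i.e. it factors
through the reduction map `ρ_B`); such lattices are called `f`-compatible. -/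
def InducedOn (f : Projectivization ℚ V → A) (W : Submodule ℚ V) (p : ℕ) (B : Set V) : Prop :=
  ∀ x y : V, ∀ (hx : x ≠ 0) (hy : y ≠ 0), x ∈ W → y ∈ W → ZpRelV p B x y →
    f (Projectivization.mk ℚ x hx) = f (Projectivization.mk ℚ y hy)

/-- Preimage in `V` of the line of `ℙ(B/pB)` through the residue classes of
`q` and `w`. -/
def resLineV (p : ℕ) (B : Set V) (q w : V) : Set V :=
  {z | ∃ a b : ℚ, ¬ (p ∣ a.den) ∧ ¬ (p ∣ b.den) ∧ ∃ y ∈ pSMul p B, z = a • q + b • w + y}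

/-- `f` is induced via `B` from a flag map on the residue projective *line*
`ℙ(B/pB)`, i.e. from a map constant off one point (the class of `q`). -/
def ResFlagLine (f : Projectivization ℚ V → A) (p : ℕ) (B : Set V) : Prop :=
  ∃ q : V, q ∈ B \ pSMul p B ∧
    ∀ x y : V, ∀ (hx : x ≠ 0) (hy : y ≠ 0), ¬ ZpRelV p B x q → ¬ ZpRelV p B y q →
      f (Projectivization.mk ℚ x hx) = f (Projectivization.mk ℚ y hy)

/-- `f` is induced via `B` from a flag map on the residue projective *plane*
`ℙ(B/pB)`: for a flag (point `q̄`) ∈ (line `l̄` through `q̄` and `w̄`), the map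
is constant off `l̄` and constant on `l̄ ∖ {q̄}`. -/
def ResFlagPlane (f : Projectivization ℚ V → A) (p : ℕ) (B : Set V) : Prop :=
  ∃ q w : V, q ∈ B \ pSMul p B ∧ w ∈ B \ pSMul p B ∧ ¬ ZpRelV p B q w ∧
    (∀ x y : V, ∀ (hx : x ≠ 0) (hy : y ≠ 0),
      (∃ a : ℚ, a ≠ 0 ∧ a • x ∈ (B \ pSMul p B) ∧ a • x ∉ resLineV p B q w) →
      (∃ b : ℚ, b ≠ 0 ∧ b • y ∈ (B \ pSMul p B) ∧ b • y ∉ resLineV p B q w) →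
      f (Projectivization.mk ℚ x hx) = f (Projectivization.mk ℚ y hy)) ∧
    (∀ x y : V, ∀ (hx : x ≠ 0) (hy : y ≠ 0),
      (∃ a : ℚ, a ≠ 0 ∧ a • x ∈ resLineV p B q w \ pSMul p B) → ¬ ZpRelV p B x q →
      (∃ b : ℚ, b ≠ 0 ∧ b • y ∈ resLineV p B q w \ pSMul p B) → ¬ ZpRelV p B y q →
      f (Projectivization.mk ℚ x hx) = f (Projectivization.mk ℚ y hy))

/-- `f` is induced via `B` from a *flag map* `f̄ : ℙ(B/pB) → A` (general
dimension): there is a chain of sublattices from `pB` to `B` (i.e. a flag of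
subspaces of `B/pB`) with `f` constant on each successive difference. -/
def ResChainFlagOn (f : Projectivization ℚ V → A) (p : ℕ) (B : Set V) : Prop :=
  ∃ c : ℕ → Set V, c 0 = pSMul p B ∧ (∃ n, c n = B) ∧ (∀ i, c i ⊆ c (i + 1)) ∧
    (∀ i, (∀ x ∈ c i, ∀ y ∈ c i, x + y ∈ c i) ∧
      (∀ q : ℚ, ¬ (p ∣ q.den) → ∀ x ∈ c i, q • x ∈ c i)) ∧
    ∀ i, ∀ x y : V, ∀ (hx : x ≠ 0) (hy : y ≠ 0),
      (∃ a : ℚ, a ≠ 0 ∧ a • x ∈ c (i + 1) \ c i) →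
      (∃ b : ℚ, b ≠ 0 ∧ b • y ∈ c (i + 1) \ c i) →
      f (Projectivization.mk ℚ x hx) = f (Projectivization.mk ℚ y hy)

/-- `f` is a flag map on the finite-dimensional projective subspace
`ℙ(W) ⊆ ℙ(V)` over `ℚ`: either a chain (flag) of subspaces as over any field,
or induced via a `ℤ_(p)`-lattice `B` in `W` from a flag map on `ℙ(B/pB)`. -/
def QFlagOn (f : Projectivization ℚ V → A) (W : Submodule ℚ V) : Prop :=
  ChainFlagOn f W ∨
    ∃ p : ℕ, p.Prime ∧ ∃ B : Set V, IsZpLatIn p W B ∧ ResChainFlagOn f p B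

/-- A flag map on `ℙ(V)` over `ℚ` (possibly infinite-dimensional): the
restriction to every finite-dimensional projective subspace is a flag map. -/
def QFlagMap (f : Projectivization ℚ V → A) : Prop :=
  ∀ W : Submodule ℚ V, FiniteDimensional ℚ W → QFlagOn f W

end PreludeBQ

/-- `r ∈ ℤ_(p)`. -/
def pLocalQ (p : ℕ) (r : ℚ) : Prop := ¬ (p ∣ r.den)

/-- Congruence modulo `p·ℤ_(p)` in `ℚ`. -/
def pCong (p : ℕ) (r s : ℚ) : Prop := ∃ t : ℚ, pLocalQ p t ∧ r - s = p * t

section PLocal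

variable {p : ℕ} {r s : ℚ}

lemma pLocalQ.mul (hp : p.Prime) (hr : pLocalQ p r) (hs : pLocalQ p s) : pLocalQ p (r * s) :=
  fun h => (hp.dvd_mul.1 (h.trans (Rat.mul_den_dvd r s))).elim hr hs

lemma pLocalQ.add (hp : p.Prime) (hr : pLocalQ p r) (hs : pLocalQ p s) : pLocalQ p (r + s) :=
  fun h => (hp.dvd_mul.1 (h.trans (Rat.add_den_dvd r s))).elim hr hs

lemma pLocalQ.neg (hr : pLocalQ p r) : pLocalQ p (-r) := by
  simpa [pLocalQ] using hr

lemma pLocalQ.sub (hp : p.Prime) (hr : pLocalQ p r) (hs : pLocalQ p s) : pLocalQ p (r - s) :=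
  sub_eq_add_neg r s ▸ hr.add hp hs.neg

lemma pLocalQ_intCast (hp : p.Prime) (n : ℤ) : pLocalQ p (n : ℚ) := by
  simpa [pLocalQ] using hp.one_lt.ne'

lemma pLocalQ_natCast (hp : p.Prime) (n : ℕ) : pLocalQ p (n : ℚ) := by
  simpa [pLocalQ] using hp.one_lt.ne'

lemma pLocalQ_zero (hp : p.Prime) : pLocalQ p 0 := by
  simpa using pLocalQ_natCast hp 0

lemma pLocalQ_one (hp : p.Prime) : pLocalQ p 1 := by
  simpa using pLocalQ_natCast hp 1

lemma pLocalQ_sum (hp : p.Prime) {ι : Type*} (S : Finset ι) {f : ι → ℚ}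
    (hf : ∀ i ∈ S, pLocalQ p (f i)) : pLocalQ p (∑ i ∈ S, f i) :=
  Finset.sum_induction f (pLocalQ p) (fun _ _ ha hb => ha.add hp hb) (pLocalQ_zero hp) hf

/-- A rational whose inverse is not `p`-local lies in `p ℤ_(p)`. -/
lemma exists_eq_mul_of_not_pLocalQ_inv (hp : p.Prime) (h : ¬ pLocalQ p r⁻¹) :
    ∃ t, pLocalQ p t ∧ r = p * t := by
  have hr : r ≠ 0 := by
    rintro rfl
    exact h (by simpa using pLocalQ_zero hp)
  have hnum : (p : ℤ) ∣ r.num := by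
    have h' : p ∣ r⁻¹.den := not_not.1 h
    rw [Rat.inv_def, Rat.den_divInt] at h'
    split_ifs at h' with h0
    · exact absurd (Rat.num_eq_zero.1 h0) hr
    · exact Int.natCast_dvd.2 (h'.trans (Nat.div_dvd_of_dvd (Nat.gcd_dvd_left _ _)))
  obtain ⟨m, hm⟩ := hnum
  have hden : ¬ p ∣ r.den := fun hd =>
    hp.one_lt.ne' (Nat.eq_one_of_dvd_coprimes r.reduced (Int.natCast_dvd.1 ⟨m, hm⟩) hd)
  refine ⟨m / r.den, fun hd => hden (hd.trans ?_), ?_⟩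
  · exact_mod_cast Rat.den_dvd m r.den
  · conv_lhs => rw [← Rat.num_div_den r, hm]
    push_cast
    ring

lemma not_pLocalQ_inv_prime (hp : p.Prime) : ¬ pLocalQ p (p : ℚ)⁻¹ := by
  simp [pLocalQ, hp.ne_zero]

lemma not_pCong_one_zero (hp : p.Prime) : ¬ pCong p 1 0 := by
  rintro ⟨t, ht, h⟩
  have hp0 : (p : ℚ) ≠ 0 := Nat.cast_ne_zero.2 hp.ne_zero
  have : t = (p : ℚ)⁻¹ := by field_simp; linarith
  exact not_pLocalQ_inv_prime hp (this ▸ ht)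

lemma pCong_refl (hp : p.Prime) (r : ℚ) : pCong p r r := ⟨0, pLocalQ_zero hp, by simp⟩

/-- `1 - p t` is a unit of `ℤ_(p)`. -/
lemma pLocalQ_inv_one_sub (hp : p.Prime) {t : ℚ} (ht : pLocalQ p t) :
    pLocalQ p (1 - p * t)⁻¹ := by
  by_contra h
  obtain ⟨u, hu, hu'⟩ := exists_eq_mul_of_not_pLocalQ_inv hp h
  exact not_pCong_one_zero hp ⟨t + u, ht.add hp hu, by linarith⟩

/-- A nonzero rational is not divisible by arbitrarily large powers of `p`. -/
lemma exists_not_pLocalQ_div_pow (hp : p.Prime) (hr : r ≠ 0) :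
    ∃ n : ℕ, ¬ pLocalQ p (r / p ^ n) := by
  by_contra! h
  have hdvd (n : ℕ) : (p : ℤ) ^ n ∣ r.num := by
    have hp0 : (p : ℚ) ≠ 0 := Nat.cast_ne_zero.2 hp.ne_zero
    set y := r / p ^ n with hy
    have hry : r = p ^ n * y := by rw [hy]; field_simp
    have key : r.num * y.den = p ^ n * (y.num * r.den) := by
      have h1 := Rat.num_div_den r
      have h2 := Rat.num_div_den y
      have hrd : (r.den : ℚ) ≠ 0 := Nat.cast_ne_zero.2 r.den_nz
      have hyd : (y.den : ℚ) ≠ 0 := Nat.cast_ne_zero.2 y.den_nz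
      rw [div_eq_iff hrd] at h1
      rw [div_eq_iff hyd] at h2
      have : (r.num : ℚ) * y.den = p ^ n * (y.num * r.den) := by
        rw [h1, h2, hry]
        ring
      exact_mod_cast this
    refine IsCoprime.dvd_of_dvd_mul_right ?_ ⟨_, key⟩
    exact (Nat.isCoprime_iff_coprime.2 ((Nat.Prime.coprime_iff_not_dvd hp).2 (h n))).pow_left
  have hlt : r.num.natAbs < p ^ r.num.natAbs := Nat.lt_pow_self hp.one_lt
  have := Nat.le_of_dvd (Int.natAbs_pos.2 (Rat.num_ne_zero.2 hr))
    (Int.natCast_dvd.1 (by exact_mod_cast hdvd r.num.natAbs))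
  omega

end PLocal

section Reduction

variable {V : Type*} [AddCommGroup V] [Module ℚ V] {p : ℕ} {B : Set V}

lemma mem_pSMul_iff (hp : p.Prime) {x : V} : x ∈ pSMul p B ↔ (p : ℚ)⁻¹ • x ∈ B := by
  have hp0 : (p : ℚ) ≠ 0 := Nat.cast_ne_zero.2 hp.ne_zero
  constructor
  · rintro ⟨b, hb, rfl⟩
    rwa [inv_smul_smul₀ hp0]
  · exact fun h => ⟨_, h, (smul_inv_smul₀ hp0 x).symm⟩

lemma ZpRelV.smul {x y : V} (h : ZpRelV p B x y) {a b : ℚ} (ha : a ≠ 0) (hb : b ≠ 0) :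
    ZpRelV p B (a • x) (b • y) := by
  obtain ⟨x', y', ⟨c, hc, rfl⟩, ⟨d, hd, rfl⟩, h⟩ := h
  exact ⟨_, _, ⟨c / a, div_ne_zero hc ha, by rw [smul_smul, div_mul_cancel₀ _ ha]⟩,
    ⟨d / b, div_ne_zero hd hb, by rw [smul_smul, div_mul_cancel₀ _ hb]⟩, h⟩

/-- Closure of `B` under the `ℤ_(p)`-module operations. -/
structure IsZpModule (p : ℕ) (B : Set V) : Prop where
  add_mem : ∀ x ∈ B, ∀ y ∈ B, x + y ∈ B
  smul_mem : ∀ q, pLocalQ p q → ∀ x ∈ B, q • x ∈ B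

lemma isZpModule_zpSpanV (hp : p.Prime) (s : Finset V) : IsZpModule p (zpSpanV p s) where
  add_mem := by
    rintro _ ⟨f, hf, rfl⟩ _ ⟨g, hg, rfl⟩
    exact ⟨f + g, fun t => pLocalQ.add hp (hf t) (hg t),
      by simp [add_smul, Finset.sum_add_distrib]⟩
  smul_mem := by
    rintro q hq _ ⟨f, hf, rfl⟩
    exact ⟨q • f, fun t => pLocalQ.mul hp hq (hf t), by simp [Finset.smul_sum, mul_smul]⟩

/-- If `e` is primitive in `B`, then `B ∩ ℚ e = ℤ_(p) e`. -/
lemma IsZpModule.pLocalQ_of_smul_mem (hp : p.Prime) (hB : IsZpModule p B) {e : V}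
    (he' : e ∉ pSMul p B) {c : ℚ} (hc : c • e ∈ B) : pLocalQ p c := by
  by_contra h
  rw [← inv_inv c] at h
  obtain ⟨t, ht, hct⟩ := exists_eq_mul_of_not_pLocalQ_inv hp h
  have hc0 : c ≠ 0 := by
    rintro rfl
    exact h (by simpa using pLocalQ_zero hp)
  refine he' ⟨t • c • e, hB.smul_mem t ht _ hc, ?_⟩
  rw [smul_smul, smul_smul, ← hct, inv_mul_cancel₀ hc0, one_smul]

/-- `(e, f)` is a `ℤ_(p)`-basis of the intersection of `B` with its `ℚ`-span. -/
def IsZpPair (p : ℕ) (B : Set V) (e f : V) : Prop :=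
  ∀ s r : ℚ, s • e + r • f ∈ B ↔ pLocalQ p s ∧ pLocalQ p r

lemma IsZpPair.symm {e f : V} (h : IsZpPair p B e f) : IsZpPair p B f e := fun s r => by
  rw [add_comm, h, and_comm]

lemma IsZpPair.mem_pSMul_iff (hp : p.Prime) {e f : V} (h : IsZpPair p B e f) (s r : ℚ) :
    s • e + r • f ∈ pSMul p B ↔ pLocalQ p ((p : ℚ)⁻¹ * s) ∧ pLocalQ p ((p : ℚ)⁻¹ * r) := by
  rw [_root_.mem_pSMul_iff hp, smul_add, smul_smul, smul_smul, h]

lemma IsZpPair.shear (hp : p.Prime) {e f : V} (h : IsZpPair p B e f) {n : ℚ}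
    (hn : pLocalQ p n) : IsZpPair p B e (f + n • e) := fun s r => by
  have : s • e + r • (f + n • e) = (s + r * n) • e + r • f := by module
  rw [this, h]
  refine ⟨fun ⟨h1, h2⟩ => ⟨?_, h2⟩, fun ⟨h1, h2⟩ => ⟨h1.add hp (h2.mul hp hn), h2⟩⟩
  simpa using h1.sub hp (h2.mul hp hn)

/-- The points `(σ : 1)` and `(1 : 0)` of the residue line are distinct. -/
lemma IsZpPair.not_zpRelV (hp : p.Prime) {e f : V} (h : IsZpPair p B e f) {σ : ℚ}
    (hσ : pLocalQ p σ) : ¬ ZpRelV p B (σ • e + f) e := by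
  rintro ⟨_, _, ⟨a, ha, rfl⟩, ⟨b, hb, rfl⟩, -, -, -, hbe, hd⟩
  have hd' : a • (σ • e + f) - b • e = (a * σ - b) • e + a • f := by module
  rw [hd', h.mem_pSMul_iff hp] at hd
  apply hbe
  have hb' : b • e = b • e + (0 : ℚ) • f := by module
  rw [hb', h.mem_pSMul_iff hp]
  refine ⟨?_, by simpa using pLocalQ_zero hp⟩
  convert (hd.2.mul hp hσ).sub hp hd.1 using 1
  ring

/-- `(1 : r)` with `r ∈ p ℤ_(p)` is the point `(1 : 0)` of the residue line. -/
lemma IsZpPair.zpRelV (hp : p.Prime) {e f : V} (h : IsZpPair p B e f) {s t : ℚ}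
    (hs' : pLocalQ p s⁻¹) (hs0 : s ≠ 0) (ht : pLocalQ p t) :
    ZpRelV p B (s • e + (p * t) • f) e := by
  have hp0 : (p : ℚ) ≠ 0 := Nat.cast_ne_zero.2 hp.ne_zero
  have hprim (r : ℚ) : (1 : ℚ) • e + r • f ∉ pSMul p B := fun hm =>
    not_pLocalQ_inv_prime hp (by simpa using ((h.mem_pSMul_iff hp _ _).1 hm).1)
  have he : e = (1 : ℚ) • e + (0 : ℚ) • f := by module
  have hx : (1 : ℚ) • e + (s⁻¹ * (p * t)) • f = s⁻¹ • (s • e + (p * t) • f) := by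
    rw [smul_add, smul_smul, smul_smul, inv_mul_cancel₀ hs0]
  refine ⟨(1 : ℚ) • e + (s⁻¹ * (p * t)) • f, e, ⟨s⁻¹, inv_ne_zero hs0, hx⟩,
    ⟨1, one_ne_zero, (one_smul _ _).symm⟩, (h _ _).2 ⟨pLocalQ_one hp, ?_⟩, hprim _, ?_, ?_, ?_⟩
  · exact hs'.mul hp ((pLocalQ_natCast hp p).mul hp ht)
  · rw [he, h]
    exact ⟨pLocalQ_one hp, pLocalQ_zero hp⟩
  · rw [he]
    exact hprim 0
  · have hd : (1 : ℚ) • e + (s⁻¹ * (p * t)) • f - e = (0 : ℚ) • e + (s⁻¹ * (p * t)) • f := by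
      module
    rw [hd, h.mem_pSMul_iff hp]
    refine ⟨by simpa using pLocalQ_zero hp, ?_⟩
    convert hs'.mul hp ht using 1
    field_simp

/-- A primitive vector `e` of a bounded `ℤ_(p)`-module extends to a basis of the intersection
with the plane spanned by `e` and `v`. -/
lemma IsZpModule.exists_isZpPair (hp : p.Prime) (hB : IsZpModule p B) {e v : V}
    (he : e ∈ B) (he' : e ∉ pSMul p B) {D : ℚ} (hD : D ≠ 0)
    (hbdd : ∀ α t : ℚ, α • e + t • v ∈ B → pLocalQ p (D * t))
    {α₀ t₀ : ℚ} (ht₀ : t₀ ≠ 0) (hmem : α₀ • e + t₀ • v ∈ B) :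
    ∃ α t : ℚ, t ≠ 0 ∧ IsZpPair p B e (α • e + t • v) := by
  classical
  have hp0 : (p : ℚ) ≠ 0 := Nat.cast_ne_zero.2 hp.ne_zero
  have hfin : ∃ n : ℕ, ¬ ∃ α : ℚ, α • e + (t₀ / p ^ n) • v ∈ B := by
    obtain ⟨n, hn⟩ := exists_not_pLocalQ_div_pow hp (mul_ne_zero hD ht₀)
    exact ⟨n, fun ⟨α, hα⟩ => hn (by simpa [mul_div_assoc] using hbdd _ _ hα)⟩
  obtain ⟨n, hn⟩ : ∃ n, Nat.find hfin = n + 1 :=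
    Nat.exists_eq_succ_of_ne_zero fun h0 => by
      have := Nat.find_spec hfin
      rw [h0] at this
      exact this ⟨α₀, by simpa using hmem⟩
  have hnot := Nat.find_spec hfin
  rw [hn] at hnot
  obtain ⟨α, hα⟩ := not_not.1 (Nat.find_min hfin (m := n) (by omega))
  set t := t₀ / (p : ℚ) ^ n with ht
  have ht0 : t ≠ 0 := div_ne_zero ht₀ (pow_ne_zero _ hp0)
  refine ⟨α, t, ht0, fun s r => ⟨fun h => ?_, fun ⟨hs, hr⟩ =>
    hB.add_mem _ (hB.smul_mem s hs _ he) _ (hB.smul_mem r hr _ hα)⟩⟩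
  have hr : pLocalQ p r := by
    by_contra hr
    rw [← inv_inv r] at hr
    obtain ⟨u, hu, hru⟩ := exists_eq_mul_of_not_pLocalQ_inv hp hr
    have hr0 : r ≠ 0 := by
      rintro rfl
      exact hr (by simpa using pLocalQ_zero hp)
    refine hnot ⟨u * (s + r * α), ?_⟩
    convert hB.smul_mem u hu _ h using 1
    have : t₀ / (p : ℚ) ^ (n + 1) = u * (r * t) := by
      have hur : u * r * p = 1 := by
        rw [mul_right_comm, mul_comm u, ← hru, inv_mul_cancel₀ hr0]
      rw [ht, pow_succ, ← mul_assoc, mul_div_assoc', div_eq_div_iff (by positivity) (by positivity)]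
      linear_combination (-t₀ * p ^ n) * hur
    rw [this]
    module
  refine ⟨hB.pLocalQ_of_smul_mem hp he' (c := s) ?_, hr⟩
  convert hB.add_mem _ h _ (hB.smul_mem (-r) hr.neg _ hα) using 1
  module

/-- If the reduction map of `B` separates the points `e + a v`, `a ∈ ℤ_(p)`, exactly modulo `p`,
then `(e, v)` is a `ℤ_(p)`-basis of the intersection of `B` with the plane it spans. -/
lemma IsZpPair.of_zpRelV (hp : p.Prime) {e f v : V} (h : IsZpPair p B e f) {c π : ℚ} (hπ : π ≠ 0)
    (hv : v = π • f - c • e) (hone : ¬ ZpRelV p B (e + (1 : ℚ) • v) e)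
    (hzero : ∀ t, pLocalQ p t → ZpRelV p B (e + (p * t) • v) e)
    (hcong : ∀ a, pLocalQ p a → ZpRelV p B (e + (a + p) • v) (e + a • v)) :
    IsZpPair p B e v := by
  have hp0 : (p : ℚ) ≠ 0 := Nat.cast_ne_zero.2 hp.ne_zero
  have hloc1 := pLocalQ_one hp
  by_cases hcπ : pLocalQ p (c / π)
  · have h' := h.shear hp hcπ.neg
    set g := f + (-(c / π)) • e with hg
    have hvg : v = π • g := by
      rw [hv, hg, smul_add, smul_smul, mul_neg, mul_div_cancel₀ _ hπ]
      module
    have hπ1 : pLocalQ p π⁻¹ := by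
      by_contra hn
      obtain ⟨t, ht, hπt⟩ := exists_eq_mul_of_not_pLocalQ_inv hp hn
      apply hone
      have := h'.zpRelV hp (by simpa using hloc1) one_ne_zero ht
      rwa [← hπt, ← hvg, one_smul, ← one_smul ℚ v] at this
    have hπ2 : pLocalQ p π := by
      by_contra hn
      rw [← inv_inv π] at hn
      obtain ⟨t, ht, hπt⟩ := exists_eq_mul_of_not_pLocalQ_inv hp hn
      refine h'.not_zpRelV hp ht ?_
      have := (hzero 1 hloc1).smul (a := t) (b := 1) (fun h0 => by simp [h0, hπ] at hπt) one_ne_zero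
      have htp : t * p * π = 1 := by
        rw [mul_comm t, ← hπt, inv_mul_cancel₀ hπ]
      rwa [one_smul, smul_add, hvg, smul_smul, smul_smul, mul_one, htp, one_smul] at this
    intro s r
    rw [hvg, smul_smul, h']
    refine and_congr_right fun _ => ⟨fun hr => ?_, fun hr => hr.mul hp hπ2⟩
    simpa [mul_assoc, hπ] using hr.mul hp hπ1
  · exfalso
    have hc0 : c ≠ 0 := by
      rintro rfl
      exact hcπ (by simpa using pLocalQ_zero hp)
    rw [← inv_div] at hcπ
    obtain ⟨u, hu, hπu⟩ := exists_eq_mul_of_not_pLocalQ_inv hp hcπ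
    have hπu' : π = p * u * c := by rw [← hπu, div_mul_cancel₀ _ hc0]
    have hu0 : u ≠ 0 := by
      rintro rfl
      simp [hπ] at hπu'
    have hX : e + c⁻¹ • v = (p * u) • f := by
      rw [hv, hπu', smul_sub, smul_smul, smul_smul, inv_mul_cancel₀ hc0,
        mul_comm, mul_assoc, mul_inv_cancel₀ hc0]
      module
    by_cases hc : pLocalQ p c
    · by_cases hc' : pLocalQ p c⁻¹
      · have hrel := hcong c⁻¹ hc'
        have hY : e + (c⁻¹ + p) • v = (p * -c) • ((-(u * c⁻¹ + p * u)) • f + e) := by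
          rw [add_smul, ← add_assoc, hX, hv, hπu']
          match_scalars
          · field_simp
          · ring
        rw [hX, hY] at hrel
        have hpc : (p : ℚ) * -c ≠ 0 := mul_ne_zero hp0 (neg_ne_zero.2 hc0)
        have := hrel.smul (inv_ne_zero hpc) (inv_ne_zero (mul_ne_zero hp0 hu0))
        rw [inv_smul_smul₀ hpc, inv_smul_smul₀ (mul_ne_zero hp0 hu0)] at this
        exact h.symm.not_zpRelV hp
          ((hu.mul hp hc').add hp ((pLocalQ_natCast hp p).mul hp hu)).neg this
      · obtain ⟨d, hd, hcd⟩ := exists_eq_mul_of_not_pLocalQ_inv hp hc'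
        apply hone
        have hunit := pLocalQ_inv_one_sub hp hd
        have hne : 1 - (p : ℚ) * d ≠ 0 := fun h0 =>
          not_pCong_one_zero hp ⟨d, hd, by linarith⟩
        have := h.zpRelV hp hunit hne
          (hu.mul hp hc)
        convert this using 1
        rw [hv, hπu', ← hcd]
        module
    · rw [← inv_inv c] at hc
      obtain ⟨d, hd, hcd⟩ := exists_eq_mul_of_not_pLocalQ_inv hp hc
      have hrel := hzero d hd
      rw [← hcd, hX] at hrel
      have := hrel.smul (inv_ne_zero (mul_ne_zero hp0 hu0)) one_ne_zero
      rw [inv_smul_smul₀ (mul_ne_zero hp0 hu0), one_smul] at this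
      exact h.not_zpRelV hp (pLocalQ_zero hp) (by simpa using this)

/-- Version of `IsZpPair.of_zpRelV` without a given basis, for a bounded `ℤ_(p)`-module. -/
lemma IsZpModule.isZpPair_of_zpRelV (hp : p.Prime) (hB : IsZpModule p B) {e v : V}
    (he : e ∈ B) (he' : e ∉ pSMul p B) {D : ℚ} (hD : D ≠ 0)
    (hbdd : ∀ α t : ℚ, α • e + t • v ∈ B → pLocalQ p (D * t))
    (hone : ¬ ZpRelV p B (e + (1 : ℚ) • v) e)
    (hzero : ∀ t, pLocalQ p t → ZpRelV p B (e + (p * t) • v) e)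
    (hcong : ∀ a, pLocalQ p a → ZpRelV p B (e + (a + p) • v) (e + a • v)) :
    IsZpPair p B e v := by
  have hp0 : (p : ℚ) ≠ 0 := Nat.cast_ne_zero.2 hp.ne_zero
  obtain ⟨_, _, ⟨a, ha, rfl⟩, -, hmem, -⟩ := hzero 1 (pLocalQ_one hp)
  rw [smul_add, smul_smul, mul_one] at hmem
  obtain ⟨α, t, ht, h⟩ := hB.exists_isZpPair hp he he' hD hbdd (mul_ne_zero ha hp0) hmem
  refine h.of_zpRelV hp (π := t⁻¹) (c := t⁻¹ * α) (inv_ne_zero ht) ?_ hone hzero hcong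
  rw [smul_add, inv_smul_smul₀ ht]
  module

end Reduction

section Standard

variable {p : ℕ}

/-- The standard lattice `ℤ_(p)³ ⊆ ℚ³`. -/
def stdZpLat (p : ℕ) : Set (Fin 3 → ℚ) := {z | ∀ i, pLocalQ p (z i)}

lemma stdZpLat_eq_zpSpanV (hp : p.Prime) :
    stdZpLat p = zpSpanV p (Finset.univ.image fun i : Fin 3 => Pi.single i (1 : ℚ)) := by
  have hinj : Function.Injective fun i : Fin 3 => (Pi.single i (1 : ℚ) : Fin 3 → ℚ) := by
    intro i j hij
    by_contra hne
    simpa [hne] using congrFun hij i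
  ext z
  constructor
  · intro hz
    refine ⟨Function.extend (fun i : Fin 3 => (Pi.single i (1 : ℚ) : Fin 3 → ℚ)) z 0,
      fun t => ?_, ?_⟩
    · by_cases ht : ∃ i : Fin 3, (Pi.single i (1 : ℚ) : Fin 3 → ℚ) = t
      · obtain ⟨i, rfl⟩ := ht
        rw [hinj.extend_apply]
        exact hz i
      · rw [Function.extend_apply' _ _ _ ht]
        exact pLocalQ_zero hp
    · rw [Finset.sum_image fun i _ j _ hij => hinj hij]
      simp_rw [hinj.extend_apply]
      exact pi_eq_sum_univ' z
  · rintro ⟨f, hf, rfl⟩ j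
    rw [Finset.sum_image fun i _ j _ hij => hinj hij, Finset.sum_apply]
    refine pLocalQ_sum hp _ fun i _ => (show pLocalQ p _ from hf _).mul hp ?_
    by_cases hij : j = i
    · subst hij
      simpa using pLocalQ_one hp
    · simpa [hij] using pLocalQ_zero hp

lemma isZpLatIn_stdZpLat (hp : p.Prime) : IsZpLatIn p ⊤ (stdZpLat p) := by
  refine ⟨⟨_, stdZpLat_eq_zpSpanV hp⟩, ?_⟩
  rw [eq_top_iff, ← (Pi.basisFun ℚ (Fin 3)).span_eq, Submodule.span_le]
  rintro _ ⟨i, rfl⟩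
  refine Submodule.subset_span fun j => ?_
  by_cases hij : j = i
  · subst hij
    simpa using pLocalQ_one hp
  · simpa [hij] using pLocalQ_zero hp

lemma zpRelV_stdZpLat_iff (hp : p.Prime) {a b a' b' : ℚ} (ha : pLocalQ p a) (hb : pLocalQ p b)
    (ha' : pLocalQ p a') (hb' : pLocalQ p b') :
    ZpRelV p (stdZpLat p) ![1, a, b] ![1, a', b'] ↔ pCong p a a' ∧ pCong p b b' := by
  have hmem {x y : ℚ} (hx : pLocalQ p x) (hy : pLocalQ p y) : ![1, x, y] ∈ stdZpLat p := by
    intro i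
    fin_cases i
    exacts [pLocalQ_one hp, hx, hy]
  constructor
  · rintro ⟨_, _, ⟨c, hc, rfl⟩, ⟨d, hd, rfl⟩, hx, hx', -, -, z, hz, hsub⟩
    have hc' : pLocalQ p c⁻¹ := by
      by_contra hn
      obtain ⟨t, ht, rfl⟩ := exists_eq_mul_of_not_pLocalQ_inv hp hn
      refine hx' ⟨t • ![1, a, b], fun i => ht.mul hp (hmem ha hb i), mul_smul _ _ _⟩
    have h0 : c - d = p * z 0 := by simpa using congrFun hsub 0
    have h1 : c * a - d * a' = p * z 1 := by simpa using congrFun hsub 1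
    have h2 : c * b - d * b' = p * z 2 := by simpa using congrFun hsub 2
    refine ⟨⟨c⁻¹ * (z 1 - z 0 * a'), hc'.mul hp ((hz 1).sub hp ((hz 0).mul hp ha')), ?_⟩,
      ⟨c⁻¹ * (z 2 - z 0 * b'), hc'.mul hp ((hz 2).sub hp ((hz 0).mul hp hb')), ?_⟩⟩
    · field_simp
      linear_combination h1 - a' * h0
    · field_simp
      linear_combination h2 - b' * h0
  · rintro ⟨⟨s, hs, hs'⟩, ⟨t, ht, ht'⟩⟩
    have hprim (x y : ℚ) : ![1, x, y] ∉ pSMul p (stdZpLat p) := fun h =>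
      not_pLocalQ_inv_prime hp (by simpa using (mem_pSMul_iff hp).1 h 0)
    refine ⟨_, _, ⟨1, one_ne_zero, (one_smul _ _).symm⟩, ⟨1, one_ne_zero, (one_smul _ _).symm⟩,
      hmem ha hb, hprim _ _, hmem ha' hb', hprim _ _, ![0, s, t], ?_, ?_⟩
    · intro i
      fin_cases i
      exacts [pLocalQ_zero hp, hs, ht]
    · ext i
      fin_cases i <;> simp [hs', ht']

/-- The coordinates of the elements of a finitely generated `ℤ_(p)`-module have a common
denominator. -/
lemma exists_common_den (hp : p.Prime) {ι : Type*} [Fintype ι] (s : Finset (ι → ℚ)) :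
    ∃ D : ℚ, D ≠ 0 ∧ ∀ w ∈ zpSpanV p s, ∀ i, pLocalQ p (D * w i) := by
  refine ⟨((∏ t ∈ s, ∏ i, (t i).den : ℕ) : ℚ), Nat.cast_ne_zero.2 <|
    Finset.prod_ne_zero_iff.2 fun t _ => Finset.prod_ne_zero_iff.2 fun i _ => (t i).den_nz, ?_⟩
  rintro _ ⟨f, hf, rfl⟩ i
  rw [Finset.sum_apply, Finset.mul_sum]
  refine pLocalQ_sum hp _ fun t ht => ?_
  obtain ⟨m, hm⟩ : (t i).den ∣ ∏ t ∈ s, ∏ i, (t i).den :=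
    (Finset.dvd_prod_of_mem (fun i => (t i).den) (Finset.mem_univ i)).trans
      (Finset.dvd_prod_of_mem (fun t : ι → ℚ => ∏ i, (t i).den) ht)
  have : ((∏ t ∈ s, ∏ i, (t i).den : ℕ) : ℚ) * (f t • t) i = f t * (m * (t i).num : ℤ) := by
    rw [hm, Pi.smul_apply, smul_eq_mul]
    push_cast
    linear_combination f t * m * Rat.mul_den_eq_num (t i)
  rw [this]
  exact (show pLocalQ p _ from hf t).mul hp (pLocalQ_intCast hp _)

lemma latEq_stdZpLat (hp : p.Prime) {B : Set (Fin 3 → ℚ)} (hB : IsZpLatIn p ⊤ B)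
    (h : ∀ a b a' b' : ℚ, pLocalQ p a → pLocalQ p b → pLocalQ p a' → pLocalQ p b' →
      (ZpRelV p B ![1, a, b] ![1, a', b'] ↔ (pCong p a a' ∧ pCong p b b'))) :
    LatEq (stdZpLat p) B := by
  obtain ⟨⟨S, rfl⟩, -⟩ := hB
  have hmod := isZpModule_zpSpanV hp S
  obtain ⟨D, hD, hbdd⟩ := exists_common_den hp S
  set B := zpSpanV p S
  have l0 := pLocalQ_zero hp
  have l1 := pLocalQ_one hp
  obtain ⟨_, _, ⟨c, hc, rfl⟩, -, he, he', -⟩ :=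
    (h 0 0 0 0 l0 l0 l0 l0).2 ⟨pCong_refl hp 0, pCong_refl hp 0⟩
  have hline (x y : ℚ) (hx : pLocalQ p x) (hy : pLocalQ p y) (hxy : x = 1 ∨ y = 1) :
      IsZpPair p B (c • ![1, 0, 0]) (c • ![0, x, y]) := by
    have hcomb (a : ℚ) : c • ![1, 0, 0] + a • c • ![0, x, y] = c • ![1, a * x, a * y] := by
      ext i
      fin_cases i <;> simp <;> ring
    have hrel (a a' : ℚ) (ha : pLocalQ p a) (ha' : pLocalQ p a') :
        ZpRelV p B (c • ![1, 0, 0] + a • c • ![0, x, y]) (c • ![1, 0, 0] + a' • c • ![0, x, y]) ↔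
          pCong p (a * x) (a' * x) ∧ pCong p (a * y) (a' * y) := by
      rw [← h _ _ _ _ (ha.mul hp hx) (ha.mul hp hy) (ha'.mul hp hx) (ha'.mul hp hy), hcomb, hcomb]
      refine ⟨fun hr => ?_, fun hr => hr.smul hc hc⟩
      simpa only [inv_smul_smul₀ hc] using hr.smul (inv_ne_zero hc) (inv_ne_zero hc)
    have hcongr (a a' t : ℚ) (ht : pLocalQ p t) (hat : a - a' = p * t) :
        pCong p (a * x) (a' * x) ∧ pCong p (a * y) (a' * y) :=
      ⟨⟨t * x, ht.mul hp hx, by linear_combination x * hat⟩,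
        ⟨t * y, ht.mul hp hy, by linear_combination y * hat⟩⟩
    have hbase : c • ![1, 0, 0] + (0 : ℚ) • c • ![0, x, y] = c • ![1, 0, 0] := by simp
    refine hmod.isZpPair_of_zpRelV hp he he' (mul_ne_zero hD hc) ?_ ?_ ?_ ?_
    · intro α t ht
      rcases hxy with rfl | rfl
      · convert hbdd _ ht 1 using 1
        simp
        ring
      · convert hbdd _ ht 2 using 1
        simp
        ring
    · intro hr
      have hr' := (hrel 1 0 l1 l0).1 (by rwa [hbase])
      rw [one_mul, one_mul, zero_mul, zero_mul] at hr'
      rcases hxy with rfl | rfl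
      exacts [not_pCong_one_zero hp hr'.1, not_pCong_one_zero hp hr'.2]
    · intro t ht
      have hpt := (pLocalQ_natCast hp p).mul hp ht
      have := (hrel (p * t) 0 hpt l0).2 (hcongr _ _ t ht (by ring))
      rwa [hbase] at this
    · intro a ha
      exact (hrel _ _ (ha.add hp (pLocalQ_natCast hp p)) ha).2 (hcongr _ _ 1 l1 (by ring))
  refine ⟨c, hc, Set.Subset.antisymm (fun w hw => ?_) ?_⟩
  · have hmem (x y t : ℚ) (hx : pLocalQ p x) (hy : pLocalQ p y) (hxy : x = 1 ∨ y = 1)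
        (h1 : w 1 = c * (t * x)) (h2 : w 2 = c * (t * y)) :
        w ∈ (fun z => c • z) '' stdZpLat p := by
      have hw' : w = (w 0 / c) • c • ![1, 0, 0] + t • c • ![0, x, y] := by
        ext i
        fin_cases i
        · simp [hc]
        · simp [h1]
          ring
        · simp [h2]
          ring
      rw [hw', hline x y hx hy hxy] at hw
      refine ⟨![w 0 / c, t * x, t * y], fun i => ?_, ?_⟩
      · fin_cases i
        exacts [hw.1, hw.2.mul hp hx, hw.2.mul hp hy]
      · ext i
        fin_cases i
        · simp [mul_div_cancel₀, hc]
        · simp [h1]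
        · simp [h2]
    by_cases h1 : w 1 = 0
    · exact hmem 0 1 (w 2 / c) l0 l1 (Or.inr rfl) (by simp [h1]) (by field_simp)
    · by_cases hloc : pLocalQ p (w 2 / w 1)
      · exact hmem 1 (w 2 / w 1) (w 1 / c) l1 hloc (Or.inl rfl) (by field_simp) (by field_simp)
      · rw [← inv_div] at hloc
        obtain ⟨u, hu, hu'⟩ := exists_eq_mul_of_not_pLocalQ_inv hp hloc
        have h2 : w 2 ≠ 0 := fun h2 => hloc (by simpa [h2] using l0)
        exact hmem (w 1 / w 2) 1 (w 2 / c) (hu' ▸ (pLocalQ_natCast hp p).mul hp hu) l1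
          (Or.inr rfl) (by field_simp) (by field_simp)
  · rintro _ ⟨z, hz, rfl⟩
    have h1 := (hline 1 0 l1 l0 (Or.inl rfl) (z 0) (z 1)).2 ⟨hz 0, hz 1⟩
    have h2 := (hline 0 1 l0 l1 (Or.inr rfl) 0 (z 2)).2 ⟨l0, hz 2⟩
    convert hmod.add_mem _ h1 _ h2 using 1
    ext i
    fin_cases i <;> simp <;> ring

end Standard

/-- Lemma 3.3: let `L ⊆ ℙ(ℚ³)` be the set of classes of
vectors `(1,a,b)` with `a, b ∈ ℤ_(p)`, and `ρ_L` the reduction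
`(1,a,b) ↦ (a mod p, b mod p) ∈ 𝔸²(F_p)`.  Then there is a `ℤ_(p)`-lattice
`B ⊆ ℚ³` such that `ρ_B` factors through `ρ_L` injectively (i.e. `ρ_B = ι∘ρ_L`
on `L` for an injection `ι : 𝔸²(F_p) ↪ ℙ(B/pB)`:  two points of `L` have the
same `ρ_B`-image iff they have the same `ρ_L`-image), and any two such
lattices are equivalent. -/
theorem stmt8 (p : ℕ) (hp : p.Prime) :
    ∃ B : Set (Fin 3 → ℚ), IsZpLatIn p ⊤ B ∧
      (∀ a b a' b' : ℚ, pLocalQ p a → pLocalQ p b → pLocalQ p a' → pLocalQ p b' →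
        (ZpRelV p B ![1, a, b] ![1, a', b'] ↔ (pCong p a a' ∧ pCong p b b'))) ∧
      ∀ B' : Set (Fin 3 → ℚ), IsZpLatIn p ⊤ B' →
        (∀ a b a' b' : ℚ, pLocalQ p a → pLocalQ p b → pLocalQ p a' → pLocalQ p b' →
          (ZpRelV p B' ![1, a, b] ![1, a', b'] ↔ (pCong p a a' ∧ pCong p b b'))) →
        LatEq B B' := by
  exact ⟨stdZpLat p, isZpLatIn_stdZpLat hp, fun _ _ _ _ ha hb ha' hb' =>
    zpRelV_stdZpLat_iff hp ha hb ha' hb', fun _ hB h => latEq_stdZpLat hp hB h⟩
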